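/- arXiv:1407.6871 — 2 statements merged into one kernel-verified Lean document; each statement's English description precedes it below -/
import Mathlib

section
/- For all real numbers x > 0 and y > 0, |x·sin(1/x) − y·sin(1/y)| ≤ √(2·|x − y|). -/
lemma aux_cos (h : ℝ) (h2 : h ^ 2 ≤ 8) : 1 - h^2/2 + h^4/32 ≤ Real.cos h := by
  have h1 := Real.one_sub_sq_div_two_le_cos (x := h/2)
  have h3 : Real.cos h = 2 * Real.cos (h/2)^2 - 1 := by
    rw [← Real.cos_two_mul]; congr 1; ring
  have h4 : 0 ≤ 1 - (h/2)^2/2 := by nlinarith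
  have h5 := pow_le_pow_left₀ h4 h1 2
  rw [h3]; nlinarith

lemma aux_sinsq (h : ℝ) (h0 : 0 ≤ h) : Real.sin h ^ 2 ≤ 3/4 * h := by
  by_cases hb : 4/3 ≤ h
  · nlinarith [Real.sin_sq_le_one h]
  push Not at hb
  have h1 := aux_cos h (by nlinarith)
  have h4 : 0 ≤ 1 - h^2/2 + h^4/32 := by nlinarith [sq_nonneg (h^2)]
  have h5 := pow_le_pow_left₀ h4 h1 2
  have h6 := Real.sin_sq_add_cos_sq h
  suffices 1 - 3/4*h ≤ (1 - h^2/2 + h^4/32)^2 by linarith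
  have key : 0 ≤ 3/4 - h + 5/16*h^3 - h^5/32 + h^7/1024 := by
    have e1 : 0 ≤ h^7 := by positivity
    -- h^5 is bounded by (16/9) h^3
    have e2 : h^5 ≤ 16/9*h^3 := by
      have : 0 ≤ h^3 := by positivity
      nlinarith [mul_nonneg this (by nlinarith : 0 ≤ 16/9 - h^2)]
    nlinarith [mul_nonneg (by linarith : 0 ≤ h + 2*(1.15:ℝ)) (sq_nonneg (h - 1.15))]
  nlinarith [mul_nonneg h0 key]

lemma aux_small (u v : ℝ) (hu : 0 < u) (huv : u < v) (hs : 2 * (v - u) ≤ u * v) :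
    (v * Real.sin u - u * Real.sin v)^2 ≤ 2 * (v - u) * (u * v) := by
  obtain ⟨s, hs'⟩ : ∃ s, s = (u+v)/2 := ⟨_, rfl⟩
  obtain ⟨h, hh⟩ : ∃ h, h = (v-u)/2 := ⟨_, rfl⟩
  obtain rfl : u = s - h := by rw [hs', hh]; ring
  obtain rfl : v = s + h := by linarith
  have hpos : 0 < h := by linarith
  have a := aux_sinsq h hpos.le
  rw [Real.sin_sub, Real.sin_add]
  have e1 := Real.sin_sq_add_cos_sq h
  have e2 := Real.sin_sq_add_cos_sq s
  generalize Real.sin h = A at *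
  generalize Real.cos h = B at *
  generalize Real.sin s = C at *
  generalize Real.cos s = D at *
  have c : ((s + h) * (C * B - D * A) - (s - h) * (C * B + D * A))^2
      ≤ 4 * (h^2 * B^2 + s^2 * A^2) := by
    have : 4 * (h^2 * B^2 + s^2 * A^2) = 4 * (h^2 * B^2 + s^2 * A^2) * (C^2 + D^2) := by
      rw [e2]; ring
    rw [this]
    nlinarith [sq_nonneg (h*B*D + s*A*C)]
  have hB : B^2 = 1 - A^2 := by linarith
  rw [hB] at c
  have hp : 0 < (s-h)*(s+h) := mul_pos hu (by linarith)
  nlinarith [mul_le_mul_of_nonneg_left a hp.le, mul_le_mul_of_nonneg_left hs hpos.le]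

lemma aux_le (x : ℝ) (hx : 0 < x) : x * Real.sin (1/x) ≤ 1 := by
  have := Real.sin_le (x := 1/x) (by positivity)
  calc _ ≤ x * (1/x) := by gcongr
    _ = 1 := by field_simp

lemma aux_le9 (x : ℝ) (hx : 0 < x) (h : x ≤ 1.1) : x * Real.sin (1/x) ≤ 0.9 := by
  by_cases hb : x ≤ 0.9
  · nlinarith [Real.sin_le_one (1/x)]
  push Not at hb
  have hu1 : 1/x ≤ 10/9 := by rw [div_le_iff₀ hx]; linarith
  have hu2 : 10/11 ≤ 1/x := by rw [le_div_iff₀ hx]; linarith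
  have hxu : x * (1/x) = 1 := by field_simp
  generalize 1/x = u at *
  suffices Real.sin u ≤ 0.9 * u by nlinarith
  have h1 := aux_cos u (by nlinarith)
  have h4 : 0 ≤ 1 - u^2/2 + u^4/32 := by nlinarith [sq_nonneg (u^2)]
  have h5 := pow_le_pow_left₀ h4 h1 2
  have h6 := Real.sin_sq_add_cos_sq u
  refine abs_le_of_sq_le_sq' ?_ (by linarith) |>.2
  obtain ⟨w, hw⟩ : ∃ w, w = u^2 := ⟨_, rfl⟩
  have w1 : 0.82 ≤ w := by rw [hw]; nlinarith
  have w2 : w ≤ 1.24 := by rw [hw]; nlinarith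
  have e4 : u^4 = w^2 := by rw [hw]; ring
  rw [e4, ← hw] at h5
  have key : 1 - 0.81 * w ≤ (1 - w/2 + w^2/32)^2 := by
    nlinarith [mul_nonneg (sub_nonneg.2 w1) (sub_nonneg.2 w2),
      sq_nonneg (1 - w/2 + w^2/32 - 0.5)]
  rw [mul_pow, ← hw]
  linarith

lemma aux_large (x y : ℝ) (hx : 0 < x) (hy : 0 < y) (hd : 1/2 ≤ x - y) :
    (x * Real.sin (1/x) - y * Real.sin (1/y))^2 ≤ 2 * (x - y) := by
  have pi1 := Real.pi_gt_d4
  have fx0 : 0 ≤ x * Real.sin (1/x) := by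
    apply mul_nonneg hx.le
    apply Real.sin_nonneg_of_nonneg_of_le_pi (by positivity)
    have : 1/x ≤ 2 := by rw [div_le_iff₀ hx]; linarith
    linarith
  have fx1 := aux_le x hx
  have fy1 := aux_le y hy
  have fxx : x * Real.sin (1/x) ≤ x := by nlinarith [Real.sin_le_one (1/x)]
  have fx9 := aux_le9 x hx
  by_cases fy0 : 0 ≤ y * Real.sin (1/y)
  · nlinarith
  push Not at fy0
  have hv : Real.pi < 1/y := by
    by_contra hc
    push Not at hc
    have := Real.sin_nonneg_of_nonneg_of_le_pi (by positivity) hc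
    nlinarith
  have p1 : -(y * Real.sin (1/y)) ≤ y := by nlinarith [Real.neg_one_le_sin (1/y)]
  have p2 : -(y * Real.sin (1/y)) ≤ 1 - Real.pi * y := by
    have h1 := Real.sin_le (x := 1/y - Real.pi) (by linarith)
    rw [Real.sin_sub_pi] at h1
    have h2 := mul_le_mul_of_nonneg_left h1 hy.le
    have h3 : y * (1/y) = 1 := by field_simp
    linarith
  have p3 : 3.1415 * y ≤ Real.pi * y := by gcongr
  generalize x * Real.sin (1/x) = F at *
  obtain ⟨p, hp⟩ : ∃ p, p = -(y * Real.sin (1/y)) := ⟨_, rfl⟩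
  have hp' : y * Real.sin (1/y) = -p := by linarith
  rw [hp'] at *
  have p4 : p ≤ 0.2416 := by linarith
  have p5 : y + p ≤ 0.4831 := by linarith
  by_cases d1 : 0.771 ≤ x - y
  · nlinarith
  push Not at d1
  have F9 := fx9 (by linarith)
  by_cases d2 : 0.652 ≤ x - y
  · nlinarith
  push Not at d2
  have D1 : F - -p ≤ (x-y) + 0.4831 := by linarith
  have D2 := pow_le_pow_left₀ (by linarith) D1 2
  nlinarith [mul_nonneg (sub_nonneg.2 hd) (sub_nonneg.2 d2.le)]

lemma aux_main (x y : ℝ) (hy : 0 < y) (hxy : y < x) :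
    (x * Real.sin (1/x) - y * Real.sin (1/y))^2 ≤ 2 * (x - y) := by
  have hx : 0 < x := hy.trans hxy
  by_cases hd : 1/2 ≤ x - y
  · exact aux_large x y hx hy hd
  push Not at hd
  have e : 1/y - 1/x = (x - y) * (1/x * (1/y)) := by field_simp
  have hq : 0 < 1/x * (1/y) := by positivity
  have := aux_small (1/x) (1/y) (by positivity) (one_div_lt_one_div_of_lt hy hxy)
    (by rw [e]; nlinarith)
  rw [e] at this
  have e2 : x * Real.sin (1/x) - y * Real.sin (1/y)
    = (x * y) * (1/y * Real.sin (1/x) - 1/x * Real.sin (1/y)) := by field_simp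
  rw [e2, mul_pow]
  calc _ ≤ (x*y)^2 * (2 * ((x - y) * (1/x * (1/y))) * (1/x * (1/y))) := by gcongr
    _ = _ := by field_simp

theorem holder_estimate (x y : ℝ) (hx : 0 < x) (hy : 0 < y) :
    |x * Real.sin (1 / x) - y * Real.sin (1 / y)| ≤ Real.sqrt (2 * |x - y|) := by
  apply Real.abs_le_sqrt
  rcases lt_trichotomy x y with h | h | h
  · have := aux_main y x hx h
    rw [abs_of_neg (by linarith)]
    nlinarith
  · subst h; simp
  · rw [abs_of_pos (by linarith)]
    exact aux_main x y hy h
end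

section
/- For all x, y in the interval [1/α_1, ∞), |x·sin(1/x) − y·sin(1/y)| ≤ √(2·|y − x|). -/
lemma hot_tangent (a b : ℝ) (ha0 : 0 ≤ a) (ha : a ≤ Real.pi) (hb0 : 0 ≤ b) (hb : b ≤ Real.pi) :
    Real.sin b ≤ Real.sin a + Real.cos a * (b - a) := by
  rcases lt_trichotomy a b with h | h | h
  · obtain ⟨c, hc, he⟩ := exists_hasDerivAt_eq_slope Real.sin Real.cos h
      Real.continuous_sin.continuousOn (fun x _ => Real.hasDerivAt_sin x)
    have h1 : Real.cos c ≤ Real.cos a :=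
      Real.cos_le_cos_of_nonneg_of_le_pi ha0 (by linarith [hc.2]) hc.1.le
    rw [eq_div_iff (by linarith)] at he
    nlinarith
  · subst h; simp
  · obtain ⟨c, hc, he⟩ := exists_hasDerivAt_eq_slope Real.sin Real.cos h
      Real.continuous_sin.continuousOn (fun x _ => Real.hasDerivAt_sin x)
    have h1 : Real.cos a ≤ Real.cos c :=
      Real.cos_le_cos_of_nonneg_of_le_pi (by linarith [hc.1]) ha hc.2.le
    rw [eq_div_iff (by linarith)] at he
    nlinarith

lemma hot_sin_lower1 (s : ℝ) (h1 : Real.pi / 2 ≤ s) (h2 : s ≤ 3 * Real.pi / 2) :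
    1 - 0.46 * s ≤ Real.sin s := by
  have p1 := Real.pi_gt_d2
  have p2 := Real.pi_lt_d2
  rcases le_total s Real.pi with h | h
  · have := Real.mul_le_sin (x := Real.pi - s) (by linarith) (by linarith)
    rw [Real.sin_pi_sub] at this
    have h3 : (0.6:ℝ) ≤ 2 / Real.pi := by rw [le_div_iff₀ (by linarith)]; linarith
    nlinarith
  · have h3 := hot_tangent (Real.pi / 3) (s - Real.pi) (by linarith) (by linarith) (by linarith)
      (by linarith)
    rw [Real.sin_pi_div_three, Real.cos_pi_div_three, Real.sin_sub_pi] at h3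
    have : √3 ≤ 1.733 := by rw [Real.sqrt_le_left (by norm_num)]; norm_num
    linarith

lemma hot_sin_lower2 (s : ℝ) (h1 : Real.pi / 2 ≤ s) (h2 : s ≤ 3 * Real.pi / 2) :
    2 - 0.7 * s ≤ Real.sin s := by
  have p1 := Real.pi_gt_d2
  have p2 := Real.pi_lt_d2
  rcases le_total s Real.pi with h | h
  · have := Real.mul_le_sin (x := Real.pi - s) (by linarith) (by linarith)
    rw [Real.sin_pi_sub] at this
    have h3 : (0.6:ℝ) ≤ 2 / Real.pi := by rw [le_div_iff₀ (by linarith)]; linarith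
    nlinarith
  · have h3 := hot_tangent (Real.pi / 4) (s - Real.pi) (by linarith) (by linarith) (by linarith)
      (by linarith)
    rw [Real.sin_pi_div_four, Real.cos_pi_div_four, Real.sin_sub_pi] at h3
    have : √2 ≤ 1.415 := by rw [Real.sqrt_le_left (by norm_num)]; norm_num
    have : 1.414 ≤ √2 := by apply Real.le_sqrt_of_sq_le; norm_num
    nlinarith

lemma hot_sin_upper (s : ℝ) (h1 : 0 ≤ s) (h2 : s ≤ 3 * Real.pi / 2) :
    Real.sin s ≤ 2 - s / 2 := by
  have p1 := Real.pi_gt_d2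
  have p2 := Real.pi_lt_d2
  rcases le_total s Real.pi with h | h
  · have h3 := hot_tangent (Real.pi - Real.pi / 3) s (by linarith) (by linarith) (by linarith)
      (by linarith)
    rw [Real.sin_pi_sub, Real.cos_pi_sub, Real.sin_pi_div_three, Real.cos_pi_div_three] at h3
    have : √3 ≤ 1.733 := by rw [Real.sqrt_le_left (by norm_num)]; norm_num
    linarith
  · have := Real.mul_le_sin (x := s - Real.pi) (by linarith) (by linarith)
    rw [Real.sin_sub_pi] at this
    have h3 : (0.6:ℝ) ≤ 2 / Real.pi := by rw [le_div_iff₀ (by linarith)]; linarith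
    nlinarith

lemma hot_phi_nonneg (α t : ℝ) (ha1 : Real.pi < α) (ha2 : α < 3 * Real.pi / 2)
    (ha : Real.sin α - α * Real.cos α = 0) (h0 : 0 < t) (ht : t ≤ α) :
    0 ≤ Real.sin t - t * Real.cos t := by
  have p1 := Real.pi_pos
  have hd : ∀ u : ℝ, HasDerivAt (fun u => Real.sin u - u * Real.cos u) (u * Real.sin u) u := by
    intro u
    have := (Real.hasDerivAt_sin u).sub ((hasDerivAt_id u).mul (Real.hasDerivAt_cos u))
    refine this.congr_deriv ?_
    simp only [id]
    ring
  have hc : Continuous (fun u : ℝ => Real.sin u - u * Real.cos u) := by fun_prop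
  rcases le_total t Real.pi with h | h
  · obtain ⟨c, hc, he⟩ := exists_hasDerivAt_eq_slope _ _ h0 hc.continuousOn (fun x _ => hd x)
    have := Real.sin_nonneg_of_nonneg_of_le_pi hc.1.le (by linarith [hc.2])
    rw [eq_div_iff (by linarith)] at he
    simp at he
    have h5 : 0 ≤ c * Real.sin c * t := mul_nonneg (mul_nonneg hc.1.le this) h0.le
    linarith
  · rcases ht.eq_or_lt with rfl | h1
    · exact ha.ge
    obtain ⟨c, hc, he⟩ := exists_hasDerivAt_eq_slope _ _ h1 hc.continuousOn (fun x _ => hd x)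
    have := Real.sin_nonneg_of_nonneg_of_le_pi (x := c - Real.pi) (by linarith [hc.1])
      (by linarith [hc.2])
    rw [Real.sin_sub_pi] at this
    rw [eq_div_iff (by linarith)] at he
    simp only [ha] at he
    have h5 : 0 ≤ c * (-Real.sin c) * (α - t) :=
      mul_nonneg (mul_nonneg (by linarith [hc.1]) this) (by linarith)
    linarith

lemma hot_quad (D h : ℝ) (hD : 0 ≤ D) (h0 : 0 < h) (h1 : D ≤ 5.73 * h) (h2 : D ≤ 2 * h + 0.2)
    (h3 : D ≤ h + 0.46) (h4 : D ≤ 1.25) : D ^ 2 ≤ 2 * h := by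
  rcases le_total h 0.06 with k | k
  · have := pow_le_pow_left₀ hD h1 2
    nlinarith
  rcases le_total h 0.26 with k2 | k2
  · have := pow_le_pow_left₀ hD h2 2
    nlinarith
  rcases le_total h 0.8 with k3 | k3
  · have := pow_le_pow_left₀ hD h3 2
    nlinarith
  · have := pow_le_pow_left₀ hD h4 2
    linarith

lemma hot_main (α : ℝ) (ha1 : Real.pi < α) (ha2 : α < 3 * Real.pi / 2)
    (ha : Real.sin α - α * Real.cos α = 0) (x y : ℝ) (hx : 1 / α ≤ x) (hxy : x < y) :
    |x * Real.sin (1 / x) - y * Real.sin (1 / y)| ≤ Real.sqrt (2 * |y - x|) := by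
  have p1 := Real.pi_gt_d2
  have p2 := Real.pi_lt_d2
  have hα : 0 < α := by linarith
  have hx0 : 0 < x := lt_of_lt_of_le (by positivity) hx
  have hy0 : 0 < y := hx0.trans hxy
  have hs : ∀ z, x ≤ z → 0 < 1 / z ∧ 1 / z ≤ α ∧ 1 / z ≤ 1 / x := by
    intro z hz
    have hz0 : 0 < z := by linarith
    refine ⟨by positivity, ?_, one_div_le_one_div_of_le hx0 hz⟩
    rw [div_le_iff₀ hα] at hx
    rw [div_le_iff₀ hz0]
    nlinarith
  have hd : ∀ z, 0 < z → HasDerivAt (fun z => z * Real.sin (1 / z))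
      (Real.sin (1 / z) - 1 / z * Real.cos (1 / z)) z := by
    intro z hz
    have h1 : HasDerivAt (fun z : ℝ => 1 / z) (-(z ^ 2)⁻¹) z := by
      simpa using hasDerivAt_inv hz.ne'
    have := (hasDerivAt_id z).mul h1.sin
    refine this.congr_deriv ?_
    simp only [id]
    field_simp
    ring
  obtain ⟨c, hc, he⟩ := exists_hasDerivAt_eq_slope (fun z => z * Real.sin (1 / z)) _ hxy
    (fun z hz => (hd z (by linarith [hz.1])).continuousAt.continuousWithinAt)
    (fun z hz => hd z (by linarith [hz.1]))
  rw [eq_div_iff (by linarith)] at he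
  obtain ⟨c1, c2, c3⟩ := hs c hc.1.le
  obtain ⟨s1, s2, -⟩ := hs x le_rfl
  obtain ⟨t1, t2, -⟩ := hs y hxy.le
  have hphi := hot_phi_nonneg α _ ha1 ha2 ha c1 c2
  have hx1 : x * (1 / x) = 1 := by field_simp
  have hy1 : y * (1 / y) = 1 := by field_simp
  have hfy1 : y * Real.sin (1 / y) ≤ 1 := by
    have := mul_le_mul_of_nonneg_left (Real.sin_le t1.le) hy0.le
    linarith
  have hfy2 : y * Real.sin (1 / y) ≤ y := by
    have := mul_le_mul_of_nonneg_left (Real.sin_le_one (1 / y)) hy0.le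
    linarith
  have hfy3 : y * Real.sin (1 / y) ≤ 2 * y - 1 / 2 := by
    have := mul_le_mul_of_nonneg_left (hot_sin_upper (1 / y) t1.le (by linarith)) hy0.le
    nlinarith
  rw [abs_sub_comm, abs_of_pos (sub_pos.2 hxy)]
  apply Real.le_sqrt_of_sq_le
  rw [sq_abs]
  obtain ⟨h, hh⟩ : ∃ h, h = y - x := ⟨_, rfl⟩
  obtain ⟨D, hD⟩ : ∃ D, D = y * Real.sin (1 / y) - x * Real.sin (1 / x) := ⟨_, rfl⟩
  have h0 : 0 < h := by linarith
  rw [← hh, ← hD] at he ⊢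
  have hD0 : 0 ≤ D := by rw [← he]; positivity
  rcases le_total (1 / x) (Real.pi / 2) with hcase | hcase
  · have hcos : 0 ≤ Real.cos (1 / c) := Real.cos_nonneg_of_neg_pi_div_two_le_of_le
      (by linarith) (by linarith)
    have h1 : D ≤ 1 * h := by
      rw [← he]
      apply mul_le_mul_of_nonneg_right _ h0.le
      have := mul_nonneg c1.le hcos
      linarith [Real.sin_le_one (1 / c)]
    have h2 : 0 ≤ x * Real.sin (1 / x) :=
      mul_nonneg hx0.le (Real.sin_nonneg_of_nonneg_of_le_pi s1.le (by linarith))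
    have h3 : D ≤ 1 := by linarith
    clear * - h1 h3 h0 hD0
    nlinarith
  · have hfx1 : x - 0.46 ≤ x * Real.sin (1 / x) := by
      have := mul_le_mul_of_nonneg_left (hot_sin_lower1 (1 / x) hcase (by linarith)) hx0.le
      nlinarith
    have hfx2 : 2 * x - 0.7 ≤ x * Real.sin (1 / x) := by
      have := mul_le_mul_of_nonneg_left (hot_sin_lower2 (1 / x) hcase (by linarith)) hx0.le
      nlinarith
    have hlip : D ≤ 5.73 * h := by
      rw [← he]
      apply mul_le_mul_of_nonneg_right _ h0.le
      have := mul_nonneg c1.le (by linarith [Real.neg_one_le_cos (1 / c)] :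
        0 ≤ 1 + Real.cos (1 / c))
      linarith [Real.sin_le_one (1 / c)]
    have hxl : 0.21 ≤ x := by
      have : 1 / x ≤ 4.725 := by linarith
      rw [div_le_iff₀ hx0] at this
      linarith
    exact hot_quad D h hD0 h0 hlip (by linarith) (by linarith) (by linarith)

theorem holder_on_tail (α₁ : ℝ)
    (hα₁ : α₁ ∈ Set.Ioo Real.pi (3 * Real.pi / 2) ∧
      Real.sin α₁ - α₁ * Real.cos α₁ = 0)
    (x y : ℝ) (hx : x ∈ Set.Ici (1 / α₁)) (hy : y ∈ Set.Ici (1 / α₁)) :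
    |x * Real.sin (1 / x) - y * Real.sin (1 / y)| ≤ Real.sqrt (2 * |y - x|) := by
  obtain ⟨⟨h1, h2⟩, h3⟩ := hα₁
  rcases lt_trichotomy x y with h | h | h
  · exact hot_main α₁ h1 h2 h3 x y hx h
  · subst h; simp
  · rw [abs_sub_comm, abs_sub_comm y x]
    exact hot_main α₁ h1 h2 h3 y x hy h
end
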